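/- For every nonnegative integer n, there exist integers x, y, z, each relatively prime to 6, such that 24n + 8 = x² + 3y² + 4z². -/

import Mathlib

/-- `-3` is a square for the Jacobi symbol modulo an odd number that is `1` modulo `3`. -/
lemma jac_neg_three (E : ℕ) (h : E % 6 = 1) : jacobiSym (-3) E = 1 := by
  have hodd : Odd E := Nat.odd_iff.mpr (by omega)
  rw [jacobiSym.mod_right (-3) hodd]
  have : E % (4 * (-3 : ℤ).natAbs) = 1 ∨ E % (4 * (-3 : ℤ).natAbs) = 7 := by
    have h12 : (4 * (-3 : ℤ).natAbs) = 12 := by decide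
    rw [h12]; omega
  rcases this with h | h <;> rw [h] <;> norm_num

/-- From a Jacobi symbol to an integral solution of `4 a p = t ^ 2 + D`. -/
lemma lift_square (p : ℕ) (hp : p.Prime) (hp2 : p % 2 = 1) (D : ℤ) (hD : 0 < D)
    (hD4 : D % 4 = 0 ∨ D % 4 = 3) (hJ : jacobiSym (-D) p = 1) :
    ∃ a t : ℤ, 0 < a ∧ 4 * a * p - t ^ 2 = D := by
  haveI : Fact p.Prime := ⟨hp⟩
  obtain ⟨y, hy⟩ := ZMod.isSquare_of_jacobiSym_eq_one hJ
  obtain ⟨t0, rfl⟩ := ZMod.intCast_surjective y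
  have h0 : (p : ℤ) ∣ t0 ^ 2 + D := by
    rw [← ZMod.intCast_zmod_eq_zero_iff_dvd]
    push_cast at hy ⊢
    linear_combination -hy
  have hpz : (p : ℤ) % 2 = 1 := by omega
  obtain ⟨t, ht, htD⟩ : ∃ t : ℤ, (p : ℤ) ∣ t ^ 2 + D ∧ (t + D) % 2 = 0 := by
    by_cases h : (t0 + D) % 2 = 0
    · exact ⟨t0, h0, h⟩
    · refine ⟨t0 + p, ?_, by omega⟩
      have : (t0 + p) ^ 2 + D = (t0 ^ 2 + D) + p * (2 * t0 + p) := by ring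
      rw [this]
      exact dvd_add h0 (dvd_mul_right _ _)
  have h4 : (4 : ℤ) ∣ t ^ 2 + D := by
    rcases Int.even_or_odd' t with ⟨m, rfl | rfl⟩
    · have : D % 4 = 0 := by omega
      have e : (2 * m) ^ 2 + D = 4 * m ^ 2 + D := by ring
      rw [e]; omega
    · have : D % 4 = 3 := by omega
      have e : (2 * m + 1) ^ 2 + D = 4 * (m ^ 2 + m) + 1 + D := by ring
      rw [e]; omega
  have hc : IsCoprime (4 : ℤ) p := by
    rw [show (4 : ℤ) = ((4 : ℕ) : ℤ) by norm_num, Nat.isCoprime_iff_coprime]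
    exact Nat.Coprime.pow_left 2 ((Nat.coprime_two_left).mpr (Nat.odd_iff.mpr hp2))
  obtain ⟨a, ha⟩ := hc.mul_dvd h4 ht
  have hppos : (0 : ℤ) < p := by exact_mod_cast hp.pos
  refine ⟨a, t, ?_, by linarith⟩
  by_contra hneg
  have : (4 * (p : ℤ)) * a ≤ 0 := mul_nonpos_of_nonneg_of_nonpos (by positivity) (by linarith)
  nlinarith [sq_nonneg t]

/-- A positive ternary form of half-discriminant `3` with last diagonal coefficient `n`. -/
lemma exists_start (n : ℕ) (hn : n % 3 = 2) :
    ∃ a b t : ℤ, 0 < a ∧ 0 < 4 * a * b - t ^ 2 ∧ n * (4 * a * b - t ^ 2) - b = 3 := by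
  have hc3 : IsCoprime (n : ℤ) 3 := by
    rw [show (3 : ℤ) = ((3 : ℕ) : ℤ) by norm_num, Nat.isCoprime_iff_coprime]
    exact ((Nat.Prime.coprime_iff_not_dvd Nat.prime_three).mpr (by omega)).symm
  have hn0 : (0 : ℤ) < n := by omega
  rcases Nat.mod_two_eq_zero_or_one n with h2 | h2
  · -- even case
    have hcop : IsCoprime (7 * (n : ℤ) - 3) ((12 * n : ℕ) : ℤ) := by
      push_cast
      refine IsCoprime.mul_right ?_ ?_
      · have h6 : (7 * (n : ℤ) - 3) % 6 = 5 := by omega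
        rw [Int.isCoprime_iff_gcd_eq_one, Int.gcd_comm]
        have : IsCoprime (7 * (n : ℤ) - 3) 6 := by
          refine ⟨-1, (7 * (n : ℤ) - 3) / 6 + 1, by omega⟩
        have h12 : IsCoprime (7 * (n : ℤ) - 3) (6 * 6) := this.mul_right this
        have := h12.of_isCoprime_of_dvd_right (show (12 : ℤ) ∣ 6 * 6 by norm_num)
        rw [Int.gcd_comm]
        exact Int.isCoprime_iff_gcd_eq_one.mp this
      · obtain ⟨u, v, huv⟩ := hc3
        exact ⟨-v, u + 7 * v, by linear_combination huv⟩
    obtain ⟨p, hpn, hp, hpm⟩ := Nat.forall_exists_prime_gt_and_zmodEq 3 (by omega) hcop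
    obtain ⟨k, hk⟩ := hpm.symm.dvd
    push_cast at hk
    have hpD : (p : ℤ) = n * (7 + 12 * k) - 3 := by linear_combination hk
    have hDpos : 0 < 7 + 12 * k := by
      by_contra hneg
      have : (n : ℤ) * (7 + 12 * k) ≤ 0 := mul_nonpos_of_nonneg_of_nonpos hn0.le (by linarith)
      omega
    obtain ⟨D, hD⟩ : ∃ D : ℕ, (D : ℤ) = 7 + 12 * k := ⟨(7 + 12 * k).toNat, by omega⟩
    rw [← hD] at hpD hDpos
    have hDm : D % 12 = 7 := by omega
    obtain ⟨m, rfl⟩ : ∃ m, n = 2 * m := ⟨n / 2, by omega⟩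
    have hp2 : p % 2 = 1 := by
      have : (p : ℤ) = 2 * (m * D) - 3 := by rw [hpD]; push_cast; ring
      omega
    have hJ3 : jacobiSym p D = 1 := by
      rw [← jac_neg_three D (by omega)]
      apply jacobiSym.mod_left'
      rw [hpD]
      exact Int.emod_emod_of_dvd _ dvd_rfl ▸ (Int.emod_emod_of_dvd _ dvd_rfl ▸ by
        rw [sub_eq_add_neg, add_comm]; simp)
    have hJ : jacobiSym (-(D : ℤ)) p = 1 := by
      rw [neg_eq_neg_one_mul, jacobiSym.mul_left, jacobiSym.at_neg_one (Nat.odd_iff.mpr hp2)]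
      rcases Nat.odd_mod_four_iff.mp hp2 with h | h
      · rw [ZMod.χ₄_nat_one_mod_four h,
          jacobiSym.quadratic_reciprocity_one_mod_four' (Nat.odd_iff.mpr (by omega)) h, hJ3]
        norm_num
      · rw [ZMod.χ₄_nat_three_mod_four h,
          jacobiSym.quadratic_reciprocity_three_mod_four (by omega) h, hJ3]
        norm_num
    obtain ⟨a, t, ha, hat⟩ := lift_square p hp hp2 D hDpos (by omega) hJ
    exact ⟨a, p, t, ha, by rw [hat]; exact hDpos, by rw [hat, hpD]; ring⟩
  · -- odd case
    have hcop : IsCoprime (4 * (n : ℤ) - 3) ((24 * n : ℕ) : ℤ) := by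
      push_cast
      refine IsCoprime.mul_right ?_ ?_
      · have h6 : (4 * (n : ℤ) - 3) % 6 = 5 := by omega
        have : IsCoprime (4 * (n : ℤ) - 3) 6 := by
          refine ⟨-1, (4 * (n : ℤ) - 3) / 6 + 1, by omega⟩
        have h12 : IsCoprime (4 * (n : ℤ) - 3) (6 * 6 * 6) := (this.mul_right this).mul_right this
        exact h12.of_isCoprime_of_dvd_right (show (24 : ℤ) ∣ 6 * 6 * 6 by norm_num)
      · obtain ⟨u, v, huv⟩ := hc3
        exact ⟨-v, u + 4 * v, by linear_combination huv⟩
    obtain ⟨p, hpn, hp, hpm⟩ := Nat.forall_exists_prime_gt_and_zmodEq 3 (by omega) hcop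
    obtain ⟨k, hk⟩ := hpm.symm.dvd
    push_cast at hk
    have hpD : (p : ℤ) = 4 * (n * (1 + 6 * k)) - 3 := by linear_combination hk
    have hDpos : 0 < 1 + 6 * k := by
      by_contra hneg
      have : (n : ℤ) * (1 + 6 * k) ≤ 0 := mul_nonpos_of_nonneg_of_nonpos hn0.le (by linarith)
      omega
    obtain ⟨D, hD⟩ : ∃ D : ℕ, (D : ℤ) = 1 + 6 * k := ⟨(1 + 6 * k).toNat, by omega⟩
    rw [← hD] at hpD hDpos
    have hDm : D % 6 = 1 := by omega
    have hp4 : p % 4 = 1 := by omega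
    have hp2 : p % 2 = 1 := by omega
    have hJ3 : jacobiSym p D = 1 := by
      rw [← jac_neg_three D (by omega)]
      apply jacobiSym.mod_left'
      have : (p : ℤ) = -3 + D * (4 * n) := by rw [hpD]; ring
      rw [this, Int.add_mul_emod_self_left]
    have hJ : jacobiSym (-(4 * D : ℤ)) p = 1 := by
      rw [neg_eq_neg_one_mul, jacobiSym.mul_left, jacobiSym.mul_left,
        jacobiSym.at_neg_one (Nat.odd_iff.mpr hp2), jacobiSym.at_four (Nat.odd_iff.mpr hp2),
        ZMod.χ₄_nat_one_mod_four hp4,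
          jacobiSym.quadratic_reciprocity_one_mod_four' (Nat.odd_iff.mpr (by omega)) hp4, hJ3]
      norm_num
    obtain ⟨a, t, ha, hat⟩ := lift_square p hp hp2 (4 * D) (by omega) (by omega) hJ
    exact ⟨a, p, t, ha, by rw [hat]; omega, by rw [hat, hpD]; ring⟩

/-- Positive integral ternary forms of half-discriminant `3` representing `n`. -/
def Good (n a b c r s t : ℤ) : Prop :=
  0 < a ∧ 0 < 4 * a * b - t ^ 2 ∧
    4 * a * b * c + r * s * t - a * r ^ 2 - b * s ^ 2 - c * t ^ 2 = 3 ∧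
    ∃ x y z : ℤ, a * x ^ 2 + b * y ^ 2 + c * z ^ 2 + r * y * z + s * z * x + t * x * y = n

lemma Good.xy {n a b c r s t : ℤ} (h : Good n a b c r s t) (k : ℤ) :
    Good n a (b + t * k + a * k ^ 2) c (r + s * k) s (t + 2 * a * k) := by
  obtain ⟨h1, h2, h3, x, y, z, h4⟩ := h
  refine ⟨h1, ?_, ?_, x - k * y, y, z, ?_⟩
  · linear_combination h2
  · linear_combination h3
  · linear_combination h4

lemma Good.xz {n a b c r s t : ℤ} (h : Good n a b c r s t) (k : ℤ) :
    Good n a b (c + s * k + a * k ^ 2) (r + t * k) (s + 2 * a * k) t := by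
  obtain ⟨h1, h2, h3, x, y, z, h4⟩ := h
  refine ⟨h1, h2, ?_, x - k * z, y, z, ?_⟩
  · linear_combination h3
  · linear_combination h4

lemma Good.yz {n a b c r s t : ℤ} (h : Good n a b c r s t) (k : ℤ) :
    Good n a b (c + r * k + b * k ^ 2) (r + 2 * b * k) (s + t * k) t := by
  obtain ⟨h1, h2, h3, x, y, z, h4⟩ := h
  refine ⟨h1, h2, ?_, x, y - k * z, z, ?_⟩
  · linear_combination h3
  · linear_combination h4

lemma Good.swapxy {n a b c r s t : ℤ} (h : Good n a b c r s t) : Good n b a c s r t := by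
  obtain ⟨h1, h2, h3, x, y, z, h4⟩ := h
  refine ⟨?_, ?_, ?_, y, x, z, ?_⟩
  · by_contra hb
    nlinarith [sq_nonneg t]
  · linear_combination h2
  · linear_combination h3
  · linear_combination h4

lemma Good.det {n a b c r s t : ℤ} (h : Good n a b c r s t) :
    (4 * a * b - t ^ 2) * (4 * a * c - s ^ 2) - (2 * a * r - s * t) ^ 2 = 12 * a := by
  obtain ⟨h1, h2, h3, -⟩ := h
  linear_combination 4 * a * h3

lemma Good.swapyz {n a b c r s t : ℤ} (h : Good n a b c r s t) : Good n a c b r t s := by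
  have hd := h.det
  obtain ⟨h1, h2, h3, x, y, z, h4⟩ := h
  refine ⟨h1, ?_, ?_, x, z, y, ?_⟩
  · by_contra hb
    nlinarith [sq_nonneg (2 * a * r - s * t)]
  · linear_combination h3
  · linear_combination h4

/-- Nearest residue. -/
lemma near (t a : ℤ) (ha : 0 < a) : ∃ k : ℤ, -a ≤ t + 2 * a * k ∧ t + 2 * a * k < a := by
  refine ⟨-((t + a) / (2 * a)), ?_, ?_⟩
  · have := Int.emod_nonneg (t + a) (show 2 * a ≠ 0 by omega)
    have e := Int.emod_add_mul_ediv (t + a) (2 * a)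
    linarith
  · have := Int.emod_lt_of_pos (t + a) (show 0 < 2 * a by omega)
    have e := Int.emod_add_mul_ediv (t + a) (2 * a)
    linarith

lemma nat_min {P : ℤ → Prop} (h0 : ∀ a, P a → 0 < a) (h : ∃ a, P a) :
    ∃ a, P a ∧ ∀ b, P b → a ≤ b := by
  obtain ⟨lb, h1, h2⟩ := Int.exists_least_of_bdd (P := P) ⟨0, fun z hz => (h0 z hz).le⟩ h
  exact ⟨lb, h1, h2⟩

/-- Class number one for half-discriminant `3`. -/
lemma reduce (n : ℤ) (h : ∃ a b c r s t, Good n a b c r s t) :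
    ∃ w u v : ℤ, n = w ^ 2 + (u ^ 2 + u * v + v ^ 2) := by
  -- minimal first coefficient
  obtain ⟨a, ⟨b0, c0, r0, s0, t0, hG0⟩, hmina⟩ :=
    nat_min (P := fun a => ∃ b c r s t, Good n a b c r s t)
      (by rintro a ⟨b, c, r, s, t, h⟩; exact h.1) h
  obtain ⟨A, ⟨b1, c1, r1, s1, t1, hG1, hA1⟩, hminA⟩ :=
    nat_min (P := fun A => ∃ b c r s t, Good n a b c r s t ∧ 4 * a * b - t ^ 2 = A)
      (by rintro A ⟨b, c, r, s, t, h, rfl⟩; exact h.2.1) ⟨_, b0, c0, r0, s0, t0, hG0, rfl⟩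
  have ha : 0 < a := hG0.1
  -- normalise `t`
  obtain ⟨k, hk1, hk2⟩ := near t1 a ha
  have hG2 := hG1.xy k
  generalize ht : t1 + 2 * a * k = t at hG2 hk1 hk2
  generalize hb : b1 + t1 * k + a * k ^ 2 = b at hG2
  generalize r1 + s1 * k = r2 at hG2
  have hA : 4 * a * b - t ^ 2 = A := by rw [← hA1, ← hb, ← ht]; ring
  have hApos : 0 < A := hA ▸ hG2.2.1
  clear hG1 hA1 hb ht
  -- normalise the cross term of the projected binary form
  obtain ⟨l, hl1, hl2⟩ := near (2 * (2 * a * r2 - s1 * t)) A hApos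
  have hG3 := hG2.yz l
  have hh : 2 * (2 * a * (r2 + 2 * b * l) - (s1 + t * l) * t) =
      2 * (2 * a * r2 - s1 * t) + 2 * A * l := by rw [← hA]; ring
  rw [← hh] at hl1 hl2
  generalize c1 + r2 * l + b * l ^ 2 = c3 at hG3
  generalize r2 + 2 * b * l = r3 at hG3 hl1 hl2
  generalize s1 + t * l = s3 at hG3 hl1 hl2
  clear hG2 hh
  -- normalise `s`
  obtain ⟨m, hm1, hm2⟩ := near s3 a ha
  have hG := hG3.xz m
  have hh : 2 * (2 * a * (r3 + t * m) - (s3 + 2 * a * m) * t) =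
      2 * (2 * a * r3 - s3 * t) := by ring
  rw [← hh] at hl1 hl2
  generalize c3 + s3 * m + a * m ^ 2 = c at hG
  generalize r3 + t * m = r at hG hl1 hl2
  generalize s3 + 2 * a * m = s at hG hl1 hl2 hm1 hm2
  clear hG3 hh
  have hab : a ≤ b := hmina b ⟨_, _, _, _, _, hG.swapxy⟩
  have hAC : A ≤ 4 * a * c - s ^ 2 := hminA _ ⟨_, _, _, _, _, hG.swapyz, rfl⟩
  have hd := hG.det
  rw [hA] at hd
  have hA16 : A ^ 2 ≤ 16 * a := by
    have h1 : A * A ≤ A * (4 * a * c - s ^ 2) := mul_le_mul_of_nonneg_left hAC hApos.le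
    have h2 : (2 * (2 * a * r - s * t)) ^ 2 ≤ A ^ 2 := by
      apply sq_le_sq'
      · linarith
      · linarith
    nlinarith
  have ht2 : t ^ 2 ≤ a ^ 2 := sq_le_sq' hk1 hk2.le
  have h3a : 3 * a ^ 2 ≤ A := by nlinarith
  have ha1 : a = 1 := by
    by_contra hne
    have h2 : 2 ≤ a := by omega
    have h9 : (3 * a ^ 2) ^ 2 ≤ A ^ 2 := by
      apply sq_le_sq' <;> nlinarith
    have h8 : 8 ≤ a ^ 3 := by nlinarith [pow_le_pow_left₀ (by norm_num : (0 : ℤ) ≤ 2) h2 3]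
    nlinarith
  subst ha1
  have hA4 : A ≤ 4 := by nlinarith
  obtain ⟨-, -, h3, x, y, z, h4⟩ := hG
  have ht' : t = 0 ∨ t = -1 := by omega
  have hs' : s = 0 ∨ s = -1 := by omega
  rcases ht' with rfl | rfl
  · have hb : b = 1 := by omega
    subst hb
    have hA' : A = 4 := by omega
    subst hA'
    have hr : -1 ≤ r ∧ r ≤ 1 := by constructor <;> linarith
    have hr' : r = -1 ∨ r = 0 ∨ r = 1 := by omega
    rcases hs' with rfl | rfl
    · rcases hr' with rfl | rfl | rfl
      · have hc : c = 1 := by linarith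
        subst hc
        exact ⟨x, y, -z, by linear_combination -h4⟩
      · omega
      · have hc : c = 1 := by linarith
        subst hc
        exact ⟨x, y, z, by linear_combination -h4⟩
    · rcases hr' with rfl | rfl | rfl
      · omega
      · have hc : c = 1 := by linarith
        subst hc
        exact ⟨y, x, -z, by linear_combination -h4⟩
      · omega
  · have hb : b = 1 := by omega
    subst hb
    have hA' : A = 3 := by omega
    subst hA'
    rcases hs' with rfl | rfl
    · have hr : r = 0 := by omega
      subst hr
      have hc : c = 1 := by linarith
      subst hc
      exact ⟨z, x, -y, by linear_combination -h4⟩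
    · have hr' : r = 0 ∨ r = 1 := by omega
      rcases hr' with rfl | rfl <;> omega

lemma rep_basic (n : ℕ) (hn : n % 3 = 2) :
    ∃ w u v : ℤ, (n : ℤ) = w ^ 2 + (u ^ 2 + u * v + v ^ 2) := by
  obtain ⟨a, b, t, h1, h2, h3⟩ := exists_start n hn
  refine reduce n ⟨a, b, n, 0, 1, t, h1, h2, ?_, 0, 0, 1, by ring⟩
  linear_combination h3

/-- Of three numbers with sum zero one is even, so `v` may be taken even. -/
lemma even_choice (u v : ℤ) : ∃ a b : ℤ, b % 2 = 0 ∧ a ^ 2 + a * b + b ^ 2 = u ^ 2 + u * v + v ^ 2 := by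
  by_cases h1 : v % 2 = 0
  · exact ⟨u, v, h1, rfl⟩
  by_cases h2 : u % 2 = 0
  · exact ⟨v, u, h2, by ring⟩
  · exact ⟨u, -(u + v), by omega, by ring⟩

lemma rep_odd (n : ℕ) (hn : n % 3 = 2) :
    ∃ w u v : ℤ, (n : ℤ) = w ^ 2 + (u ^ 2 + u * v + v ^ 2) ∧ (u ^ 2 + u * v + v ^ 2) % 2 = 1 := by
  induction n using Nat.strong_induction_on with
  | _ n ih =>
  by_cases h4 : n % 4 = 0
  · obtain ⟨k, rfl⟩ : ∃ k, n = 4 * k := ⟨n / 4, by omega⟩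
    obtain ⟨w, u, v, hk, ho⟩ := ih k (by omega) (by omega)
    obtain ⟨a, b, hb, e⟩ := even_choice u v
    rw [← e] at hk ho
    have haodd : a % 2 = 1 := by
      by_contra hne
      obtain ⟨a', rfl⟩ : ∃ a', a = 2 * a' := ⟨a / 2, by omega⟩
      obtain ⟨b', rfl⟩ : ∃ b', b = 2 * b' := ⟨b / 2, by omega⟩
      have : (2 * a') ^ 2 + 2 * a' * (2 * b') + (2 * b') ^ 2 =
        2 * (2 * (a' ^ 2 + a' * b' + b' ^ 2)) := by ring
      omega
    -- `4 m = (2 b + a) ^ 2 + 3 a ^ 2`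
    refine ⟨2 * b + a, 2 * w - a, 2 * a, ?_, ?_⟩
    · push_cast
      rw [hk]; ring
    · obtain ⟨j, rfl⟩ : ∃ j, a = 2 * j + 1 := ⟨a / 2, by omega⟩
      have : (2 * w - (2 * j + 1)) ^ 2 + (2 * w - (2 * j + 1)) * (2 * (2 * j + 1)) +
          (2 * (2 * j + 1)) ^ 2 = 2 * (2 * w ^ 2 + 6 * j ^ 2 + 6 * j + 1) + 1 := by ring
      omega
  · obtain ⟨w, u, v, h⟩ := rep_basic n hn
    by_cases ho : (u ^ 2 + u * v + v ^ 2) % 2 = 1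
    · exact ⟨w, u, v, h, ho⟩
    have huv : u % 2 = 0 ∧ v % 2 = 0 := by
      rcases Int.even_or_odd' u with ⟨i, rfl | rfl⟩ <;> rcases Int.even_or_odd' v with ⟨j, rfl | rfl⟩
      · omega
      · ring_nf at ho; omega
      · ring_nf at ho; omega
      · ring_nf at ho; omega
    obtain ⟨u', rfl⟩ : ∃ a', u = 2 * a' := ⟨u / 2, by omega⟩
    obtain ⟨v', rfl⟩ : ∃ b', v = 2 * b' := ⟨v / 2, by omega⟩
    obtain ⟨a, b, hb, e⟩ := even_choice u' v'
    have h' : (n : ℤ) = w ^ 2 + 4 * (a ^ 2 + a * b + b ^ 2) := by rw [h, e]; ring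
    have hw : w % 2 = 1 := by
      by_contra hne
      obtain ⟨w', rfl⟩ : ∃ a', w = 2 * a' := ⟨w / 2, by omega⟩
      have : (2 * w') ^ 2 = 4 * w' ^ 2 := by ring
      omega
    refine ⟨2 * a + b, w - b, 2 * b, by rw [h']; ring, ?_⟩
    obtain ⟨j, rfl⟩ : ∃ j, w = 2 * j + 1 := ⟨w / 2, by omega⟩
    obtain ⟨i, rfl⟩ : ∃ j, b = 2 * j := ⟨b / 2, by omega⟩
    have : (2 * j + 1 - 2 * i) ^ 2 + (2 * j + 1 - 2 * i) * (2 * (2 * i)) + (2 * (2 * i)) ^ 2 =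
      2 * (2 * j ^ 2 + 2 * j + 6 * i ^ 2) + 1 := by ring
    omega

lemma gcd_six (x : ℤ) (h2 : x % 2 = 1) (h3 : x % 3 ≠ 0) : Int.gcd x 6 = 1 := by
  rw [← Int.isCoprime_iff_gcd_eq_one]
  have h : x % 6 = 1 ∨ x % 6 = 5 := by omega
  rcases h with h | h
  · exact ⟨1, -(x / 6), by omega⟩
  · exact ⟨-1, x / 6 + 1, by omega⟩

lemma sq_mod_three (x : ℤ) : (x % 3 = 0 ∧ x ^ 2 % 3 = 0) ∨ (x % 3 ≠ 0 ∧ x ^ 2 % 3 = 1) := by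
  have h : x % 3 = 0 ∨ x % 3 = 1 ∨ x % 3 = 2 := by omega
  rcases h with h | h | h <;> simp [pow_two, Int.mul_emod, h]

theorem rep_24n_add_eight (n : ℕ) :
    ∃ x y z : ℤ, Int.gcd x 6 = 1 ∧ Int.gcd y 6 = 1 ∧ Int.gcd z 6 = 1 ∧
      24 * (n : ℤ) + 8 = x ^ 2 + 3 * y ^ 2 + 4 * z ^ 2 := by
  obtain ⟨z, u, v, h, ho⟩ := rep_odd (6 * n + 2) (by omega)
  push_cast at h
  obtain ⟨a, b, hb, e⟩ := even_choice u v
  rw [← e] at h ho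
  have hz2 : z % 2 = 1 := by
    by_contra hne
    obtain ⟨w', rfl⟩ : ∃ a', z = 2 * a' := ⟨z / 2, by omega⟩
    have : (2 * w') ^ 2 = 2 * (2 * w' ^ 2) := by ring
    omega
  have ha2 : a % 2 = 1 := by
    by_contra hne
    obtain ⟨a', rfl⟩ : ∃ a', a = 2 * a' := ⟨a / 2, by omega⟩
    have : (2 * a') ^ 2 + 2 * a' * b + b ^ 2 = 2 * (2 * a' ^ 2 + a' * b) + b * b := by ring
    obtain ⟨b', rfl⟩ : ∃ b', b = 2 * b' := ⟨b / 2, by omega⟩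
    have : (2 * b') * (2 * b') = 2 * (2 * b' ^ 2) := by ring
    omega
  -- the two candidates: `y = a` with `x = a + 2 b`, or `y = a + b` with `x = a - b`
  have key : ∀ x y : ℤ, x % 2 = 1 → y % 2 = 1 → y % 3 ≠ 0 →
      4 * (a ^ 2 + a * b + b ^ 2) = x ^ 2 + 3 * y ^ 2 →
      ∃ x y z : ℤ, Int.gcd x 6 = 1 ∧ Int.gcd y 6 = 1 ∧ Int.gcd z 6 = 1 ∧
      24 * (n : ℤ) + 8 = x ^ 2 + 3 * y ^ 2 + 4 * z ^ 2 := by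
    intro x y hx hy hy3 hxy
    have e24 : 24 * (n : ℤ) + 8 = x ^ 2 + 3 * y ^ 2 + 4 * z ^ 2 := by linarith
    have h3x := sq_mod_three x
    have h3z := sq_mod_three z
    exact ⟨x, y, z, gcd_six x hx (by omega), gcd_six y hy hy3, gcd_six z hz2 (by omega), e24⟩
  by_cases ha3 : a % 3 = 0
  · by_cases hab3 : (a + b) % 3 = 0
    · exfalso
      obtain ⟨a', rfl⟩ : ∃ a', a = 3 * a' := ⟨a / 3, by omega⟩
      obtain ⟨b', rfl⟩ : ∃ b', b = 3 * b' := ⟨b / 3, by omega⟩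
      have : (3 * a') ^ 2 + 3 * a' * (3 * b') + (3 * b') ^ 2 =
        3 * (3 * (a' ^ 2 + a' * b' + b' ^ 2)) := by ring
      have h3z := sq_mod_three z
      omega
    · exact key (a - b) (a + b) (by omega) (by omega) hab3 (by ring)
  · exact key (a + 2 * b) a (by omega) ha2 ha3 (by ring)
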